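/- Let N and M be nonempty finite types and let R : Matrix N M ℂ satisfy trace (R * Rᴴ) = 1. Then the von Neumann entropy H(R) of R equals 0 if and only if there exist vectors c : N → ℂ and d : M → ℂ such that R i j = c i * d j for all i ∈ N and j ∈ M (i.e., R is an outer product, R = vecMulVec c d). (Paper's Theorem 1.) -/

import Mathlib

open Matrix

/-- The von Neumann entropy of a relational matrix `R`, defined as
`-∑ₖ λₖ log λₖ` where `λₖ` are the eigenvalues of the Hermitian matrix `ρ = R * Rᴴ`. -/
noncomputable def vonNeumannEntropy {N M : Type*} [Fintype N] [Fintype M] [DecidableEq N]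
    (R : Matrix N M ℂ) : ℝ :=
  -∑ k, (Matrix.isHermitian_mul_conjTranspose_self R).eigenvalues k *
      Real.log ((Matrix.isHermitian_mul_conjTranspose_self R).eigenvalues k)

lemma aux_entropy {N : Type*} [Fintype N] (f : N → ℝ) (h0 : ∀ i, 0 ≤ f i)
    (h1 : ∑ i, f i = 1) :
    -∑ k, f k * Real.log (f k) = 0 ↔ Fintype.card {i // f i ≠ 0} ≤ 1 := by
  classical
  rw [Fintype.card_le_one_iff_subsingleton]
  have hle : ∀ i, f i ≤ 1 := fun i => by
    rw [← h1]
    exact Finset.single_le_sum (fun j _ => h0 j) (Finset.mem_univ i)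
  constructor
  · intro h
    rw [← Finset.sum_neg_distrib, Finset.sum_eq_zero_iff_of_nonneg] at h
    · have hone : ∀ i, f i ≠ 0 → f i = 1 := by
        intro i hi
        have h2 := h i (Finset.mem_univ i)
        have h3 : f i * Real.log (f i) = 0 := by linarith
        rcases mul_eq_zero.mp h3 with h4 | h4
        · exact absurd h4 hi
        · exact Real.eq_one_of_pos_of_log_eq_zero (lt_of_le_of_ne (h0 i) (Ne.symm hi)) h4
      constructor
      rintro ⟨i, hi⟩ ⟨j, hj⟩
      by_contra hne
      have hij : i ≠ j := fun e => hne (Subtype.ext e)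
      have h5 : ∑ k ∈ ({i, j} : Finset N), f k ≤ ∑ k, f k :=
        Finset.sum_le_sum_of_subset_of_nonneg (Finset.subset_univ _) (fun k _ _ => h0 k)
      rw [Finset.sum_pair hij, hone i hi, hone j hj, h1] at h5
      norm_num at h5
    · intro i _
      have := mul_nonpos_of_nonneg_of_nonpos (h0 i) (Real.log_nonpos (h0 i) (hle i))
      linarith
  · intro hs
    obtain ⟨i, hi⟩ : ∃ i, f i ≠ 0 := by
      by_contra! hc
      simp [hc] at h1
    have hz : ∀ j, j ≠ i → f j = 0 := by
      intro j hj
      by_contra hc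
      exact hj (congrArg Subtype.val (hs.elim ⟨j, hc⟩ ⟨i, hi⟩))
    have hi1 : f i = 1 := by
      rw [← h1, Fintype.sum_eq_single i hz]
    rw [Fintype.sum_eq_single i (fun j hj => by simp [hz j hj]), hi1]
    simp

lemma aux_rank {N M : Type*} [Fintype N] [Fintype M] (R : Matrix N M ℂ) :
    R.rank ≤ 1 ↔ ∃ (c : N → ℂ) (d : M → ℂ), R = Matrix.vecMulVec c d := by
  classical
  constructor
  · intro h
    obtain ⟨v, hv⟩ := finrank_le_one_iff.mp h
    have hm : ∀ j, ∃ a : ℂ, a • (v : N → ℂ) = R.col j := by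
      intro j
      obtain ⟨a, ha⟩ := hv ⟨R.mulVecLin (Pi.single j 1), LinearMap.mem_range_self _ _⟩
      refine ⟨a, ?_⟩
      have := congrArg Subtype.val ha
      simpa using this
    choose d hd using hm
    refine ⟨v, d, ?_⟩
    ext i j
    have := congrFun (hd j) i
    simp only [Pi.smul_apply, smul_eq_mul, Matrix.col_apply] at this
    rw [Matrix.vecMulVec_apply, ← this, mul_comm]
  · rintro ⟨c, d, rfl⟩
    exact Matrix.rank_vecMulVec_le c d

section
open scoped ComplexOrder

lemma aux_rank_self {N M : Type*} [Fintype N] [Fintype M] (R : Matrix N M ℂ) :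
    (R * Rᴴ).rank = R.rank := Matrix.rank_self_mul_conjTranspose R

lemma aux_nonneg {N M : Type*} [Fintype N] [Fintype M] [DecidableEq N] (R : Matrix N M ℂ)
    (i : N) : 0 ≤ (Matrix.isHermitian_mul_conjTranspose_self R).eigenvalues i :=
  (Matrix.posSemidef_self_mul_conjTranspose R).eigenvalues_nonneg i

end

/-- Paper's Theorem 1: `H(R) = 0` iff `R` is an outer product `R i j = c i * d j`. -/
theorem entropy_zero_iff_outer_product {N M : Type*} [Fintype N] [Fintype M] [DecidableEq N]
    [Nonempty N] [Nonempty M]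
    (R : Matrix N M ℂ) (htr : (R * Rᴴ).trace = 1) :
    vonNeumannEntropy R = 0 ↔ ∃ (c : N → ℂ) (d : M → ℂ), R = Matrix.vecMulVec c d := by
  have hH := Matrix.isHermitian_mul_conjTranspose_self R
  rw [← aux_rank, ← aux_rank_self, hH.rank_eq_card_non_zero_eigs]
  refine aux_entropy hH.eigenvalues (aux_nonneg R) ?_
  have h := hH.trace_eq_sum_eigenvalues
  rw [htr] at h
  have h2 := congrArg Complex.re h
  simpa using h2.symm
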